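/- Let d ≥ 2 and let C be a Hermitian matrix on ℂ^d⊗ℂ^d of rank at most 3. Then λ(tr_1[C]) ⊕ λ(tr_2[C]) ≺ λ(tr_1[Λ]) ⊕ λ(tr_2[Λ]), where Λ is the diagonal matrix on ℂ^d⊗ℂ^d whose diagonal lists the eigenvalues of C in decreasing order (with respect to the lexicographic index ordering). -/

import Mathlib

open Matrix Finset Kronecker
open scoped ComplexOrder

/-- The first partial trace of a matrix on `ℂ^{d1} ⊗ ℂ^{d2}` (index pairs `(i,s)` ordered
lexicographically): `(tr_1 C)_{s,t} = ∑_i C_{(i,s),(i,t)}`. -/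
noncomputable def ptrace1 {d1 d2 : ℕ} (C : Matrix (Fin d1 × Fin d2) (Fin d1 × Fin d2) ℂ) :
    Matrix (Fin d2) (Fin d2) ℂ :=
  Matrix.of fun s t => ∑ i : Fin d1, C (i, s) (i, t)

/-- The second partial trace: `(tr_2 C)_{i,j} = ∑_s C_{(i,s),(j,s)}`. -/
noncomputable def ptrace2 {d1 d2 : ℕ} (C : Matrix (Fin d1 × Fin d2) (Fin d1 × Fin d2) ℂ) :
    Matrix (Fin d1) (Fin d1) ℂ :=
  Matrix.of fun i j => ∑ s : Fin d2, C (i, s) (j, s)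

/-- The sum of the `k` largest entries of the vector `x` (the largest value of a sum of `k`
entries of `x`), i.e. `∑_{i=1}^k x_i^↓`. -/
noncomputable def maxSum {ι : Type*} [Fintype ι] (x : ι → ℝ) (k : ℕ) : ℝ :=
  sSup {s : ℝ | ∃ A : Finset ι, A.card = k ∧ s = ∑ i ∈ A, x i}

/-- `x ≺ y` (majorization): for every `k`, the sum of the `k` largest entries of `x` is at
most the sum of the `k` largest entries of `y`, and the total sums are equal. -/
def Majorizes {ι κ : Type*} [Fintype ι] [Fintype κ] (x : ι → ℝ) (y : κ → ℝ) : Prop :=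
  (∀ k : ℕ, maxSum x k ≤ maxSum y k) ∧ ∑ i, x i = ∑ j, y j

/-- `x ≺_w y` (weak majorization). -/
def WeakMajorizes {ι κ : Type*} [Fintype ι] [Fintype κ] (x : ι → ℝ) (y : κ → ℝ) : Prop :=
  ∀ k : ℕ, maxSum x k ≤ maxSum y k

/-!
If `U` and `V` diagonalise `tr_2 C` and `tr_1 C`, then the diagonal of `C` in the basis given by
`U ⊗ V` is an array whose row and column sums are the eigenvalues of the two partial traces. By
Schur this array is a doubly stochastic image of the spectrum of `C`, hence by Birkhoff a convex
combination of rearrangements of it, and a convex combination of vectors majorized by `y` is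
majorized by `y`. So it suffices to compare an arbitrary rearrangement with the lexicographic one.

A sum over a set `T` of lines weights each cell by the number of lines of `T` through it, and at
most three cells carry nonzero eigenvalues. Negating the spectrum and reversing the index order, we
may assume that at most one eigenvalue is negative. After Abel summation it remains to bound the
total weight of the cells of the one, two or three largest eigenvalues from above, and the weight
of the cell of the negative one from below. For the lexicographic arrangement all these bounds are
attained at once when the lines of `T` are replaced by the first `T.card` lines of a fixed list.
-/

section Majorization

variable {ι κ A : Type*} [Fintype ι] [Fintype κ] [Fintype A]

lemma sum_le_maxSum (x : ι → ℝ) (S : Finset ι) : ∑ i ∈ S, x i ≤ maxSum x S.card := by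
  refine le_csSup ((Set.finite_range fun B : Finset ι => ∑ i ∈ B, x i).subset ?_).bddAbove
    ⟨S, rfl, rfl⟩
  rintro _ ⟨B, -, rfl⟩
  exact ⟨B, rfl⟩

lemma maxSum_le {x : ι → ℝ} {k : ℕ} {b : ℝ} (hk : k ≤ Fintype.card ι)
    (h : ∀ S : Finset ι, S.card = k → ∑ i ∈ S, x i ≤ b) : maxSum x k ≤ b := by
  obtain ⟨S, -, hS⟩ := Finset.exists_subset_card_eq (s := Finset.univ) hk
  refine csSup_le ⟨_, S, hS, rfl⟩ ?_
  rintro _ ⟨S, hS, rfl⟩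
  exact h S hS

lemma maxSum_of_card_lt (x : ι → ℝ) {k : ℕ} (hk : Fintype.card ι < k) : maxSum x k = 0 := by
  have hempty : {s : ℝ | ∃ A : Finset ι, A.card = k ∧ s = ∑ i ∈ A, x i} = ∅ := by
    rw [Set.eq_empty_iff_forall_notMem]
    rintro _ ⟨S, hS, -⟩
    exact hk.not_ge (hS ▸ S.card_le_univ)
  rw [maxSum, hempty, Real.sSup_empty]

lemma maxSum_comp_equiv_le (x : ι → ℝ) (φ : κ ≃ ι) (k : ℕ) : maxSum (x ∘ φ) k ≤ maxSum x k := by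
  rcases le_or_gt k (Fintype.card κ) with hk | hk
  · refine maxSum_le hk fun S hS => ?_
    simpa [hS] using sum_le_maxSum x (S.map φ.toEmbedding)
  · rw [maxSum_of_card_lt _ hk, maxSum_of_card_lt _ (Fintype.card_congr φ ▸ hk)]

lemma maxSum_neg_le (x : ι → ℝ) {k : ℕ} (hk : k ≤ Fintype.card ι) :
    maxSum (-x) k ≤ maxSum x (Fintype.card ι - k) - ∑ i, x i := by
  classical
  refine maxSum_le hk fun S hS => ?_
  have hcompl := sum_le_maxSum x Sᶜ
  rw [Finset.card_compl, hS] at hcompl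
  simp only [Pi.neg_apply, Finset.sum_neg_distrib]
  linarith [Finset.sum_add_sum_compl S x]

lemma maxSum_sum_smul_le {w : A → ℝ} (hw : ∀ a, 0 ≤ w a) (x : A → ι → ℝ) (k : ℕ) :
    maxSum (∑ a, w a • x a) k ≤ ∑ a, w a * maxSum (x a) k := by
  rcases le_or_gt k (Fintype.card ι) with hk | hk
  · refine maxSum_le hk fun S hS => ?_
    calc ∑ i ∈ S, (∑ a, w a • x a) i = ∑ a, w a * ∑ i ∈ S, x a i := by
          simp only [Finset.sum_apply, Pi.smul_apply, smul_eq_mul, Finset.mul_sum]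
          exact Finset.sum_comm
      _ ≤ ∑ a, w a * maxSum (x a) k := Finset.sum_le_sum fun a _ =>
          mul_le_mul_of_nonneg_left (hS ▸ sum_le_maxSum (x a) S) (hw a)
  · simp [maxSum_of_card_lt _ hk]

lemma majorizes_of_forall_exists_sum_le {x y : ι → ℝ}
    (hle : ∀ S : Finset ι, ∃ S' : Finset ι, S'.card = S.card ∧ ∑ i ∈ S, x i ≤ ∑ i ∈ S', y i)
    (hsum : ∑ i, x i = ∑ i, y i) : Majorizes x y := by
  refine ⟨fun k => ?_, hsum⟩
  rcases le_or_gt k (Fintype.card ι) with hk | hk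
  · refine maxSum_le hk fun S hS => ?_
    obtain ⟨S', hcard, hSS'⟩ := hle S
    exact hSS'.trans (hS ▸ hcard ▸ sum_le_maxSum y S')
  · simp only [maxSum_of_card_lt _ hk, le_refl]

lemma Majorizes.sum_smul {w : A → ℝ} (hw : ∀ a, 0 ≤ w a) (hw1 : ∑ a, w a = 1)
    {x : A → ι → ℝ} {y : κ → ℝ} (h : ∀ a, Majorizes (x a) y) :
    Majorizes (∑ a, w a • x a) y := by
  refine ⟨fun k => (maxSum_sum_smul_le hw x k).trans ?_, ?_⟩
  · calc ∑ a, w a * maxSum (x a) k ≤ ∑ a, w a * maxSum y k :=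
          Finset.sum_le_sum fun a _ => mul_le_mul_of_nonneg_left ((h a).1 k) (hw a)
      _ = maxSum y k := by rw [← Finset.sum_mul, hw1, one_mul]
  · calc ∑ i, (∑ a, w a • x a) i = ∑ a, w a * ∑ i, x a i := by
          simp only [Finset.sum_apply, Pi.smul_apply, smul_eq_mul, Finset.mul_sum]
          exact Finset.sum_comm
      _ = ∑ j, y j := by simp only [(h _).2, ← Finset.sum_mul, hw1, one_mul]

lemma Majorizes.neg {x y : ι → ℝ} (h : Majorizes x y) : Majorizes (-x) (-y) := by
  refine ⟨fun k => ?_, by simpa using h.2⟩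
  rcases le_or_gt k (Fintype.card ι) with hk | hk
  · have hx := maxSum_neg_le x hk
    have hy := maxSum_neg_le (-y) (Nat.sub_le (Fintype.card ι) k)
    rw [neg_neg, Nat.sub_sub_self hk] at hy
    simp only [Pi.neg_apply, Finset.sum_neg_distrib] at hy
    linarith [h.1 (Fintype.card ι - k), h.2]
  · simp only [maxSum_of_card_lt _ hk, le_refl]

lemma Majorizes.of_comp_equiv {ν : Type*} [Fintype ν] {x : ι → ℝ} {y : κ → ℝ} (φ : ν ≃ κ)
    (h : Majorizes x (y ∘ φ)) : Majorizes x y :=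
  ⟨fun k => (h.1 k).trans (maxSum_comp_equiv_le y φ k), h.2.trans (Equiv.sum_comp φ y)⟩

end Majorization

section Lines

variable {α β : Type*}

/-- The column sums (indexed by `β`) followed by the row sums (indexed by `α`) of a rectangular
array; for the diagonal of a matrix these are the diagonals of its two partial traces. -/
def lineSums [Fintype α] [Fintype β] (c : α × β → ℝ) : β ⊕ α → ℝ :=
  Sum.elim (fun s => ∑ i, c (i, s)) (fun i => ∑ s, c (i, s))

lemma lineSums_neg [Fintype α] [Fintype β] (c : α × β → ℝ) : lineSums (-c) = -lineSums c := by
  ext (s | i) <;> simp [lineSums]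

lemma lineSums_sum_smul {A : Type*} [Fintype A] [Fintype α] [Fintype β] (w : A → ℝ)
    (c : A → α × β → ℝ) : lineSums (∑ a, w a • c a) = ∑ a, w a • lineSums (c a) := by
  ext (s | i) <;> simpa [lineSums, Finset.mul_sum] using Finset.sum_comm

lemma lineSums_comp_prodCongr {α' β' : Type*} [Fintype α] [Fintype β] [Fintype α'] [Fintype β']
    (c : α × β → ℝ) (φ : α' ≃ α) (ψ : β' ≃ β) :
    lineSums (c ∘ φ.prodCongr ψ) = lineSums c ∘ ψ.sumCongr φ := by
  ext (s | i)
  · exact Equiv.sum_comp φ fun i => c (i, ψ s)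
  · exact Equiv.sum_comp ψ fun s => c (φ i, s)

lemma sum_lineSums [Fintype α] [Fintype β] (c : α × β → ℝ) :
    ∑ t, lineSums c t = 2 * ∑ x, c x := by
  simp only [lineSums, Fintype.sum_sum_type, Sum.elim_inl, Sum.elim_inr, Fintype.sum_prod_type]
  rw [Finset.sum_comm, two_mul]

variable [DecidableEq α] [DecidableEq β]

/-- The number of lines (columns `Sum.inl s` and rows `Sum.inr i`) in the set `T` that pass through
the cell `x`. It is the coefficient of the entry `x` in a partial sum of `lineSums`. -/
def lineCount (T : Finset (β ⊕ α)) (x : α × β) : ℕ :=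
  (if Sum.inr x.1 ∈ T then 1 else 0) + (if Sum.inl x.2 ∈ T then 1 else 0)

lemma lineCount_le_two (T : Finset (β ⊕ α)) (x : α × β) : lineCount T x ≤ 2 := by
  unfold lineCount
  split_ifs <;> omega

lemma lineCount_add_lineCount_compl [Fintype α] [Fintype β] (T : Finset (β ⊕ α)) (x : α × β) :
    lineCount T x + lineCount Tᶜ x = 2 := by
  simp only [lineCount, Finset.mem_compl]
  split_ifs <;> simp_all

lemma sum_lineSums_eq_sum_mul_lineCount [Fintype α] [Fintype β] (c : α × β → ℝ)
    (T : Finset (β ⊕ α)) : ∑ t ∈ T, lineSums c t = ∑ x, c x * lineCount T x := by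
  have hrows : ∑ x : α × β, (if Sum.inr x.1 ∈ T then c x else 0) =
      ∑ i, if Sum.inr i ∈ T then ∑ s, c (i, s) else 0 := by
    rw [Fintype.sum_prod_type]
    exact Finset.sum_congr rfl fun i _ => by split_ifs <;> simp
  have hcols : ∑ x : α × β, (if Sum.inl x.2 ∈ T then c x else 0) =
      ∑ s, if Sum.inl s ∈ T then ∑ i, c (i, s) else 0 := by
    rw [Fintype.sum_prod_type_right]
    exact Finset.sum_congr rfl fun s _ => by split_ifs <;> simp
  calc ∑ t ∈ T, lineSums c t = ∑ t, if t ∈ T then lineSums c t else 0 := by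
        rw [Finset.sum_ite_mem, Finset.univ_inter]
    _ = ∑ x, ((if Sum.inr x.1 ∈ T then c x else 0) + if Sum.inl x.2 ∈ T then c x else 0) := by
        rw [Finset.sum_add_distrib, hrows, hcols, Fintype.sum_sum_type, add_comm]
        rfl
    _ = ∑ x, c x * lineCount T x := by
        simp only [lineCount, Nat.cast_add, Nat.cast_ite, Nat.cast_one, Nat.cast_zero, mul_add,
          mul_ite, mul_one, mul_zero]

lemma sum_lineSums_comp_equiv {ι : Type*} [Fintype ι] [Fintype α] [Fintype β] (μ : ι → ℝ)
    (τ : α × β ≃ ι) (T : Finset (β ⊕ α)) :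
    ∑ t ∈ T, lineSums (μ ∘ τ) t = ∑ k, μ k * lineCount T (τ.symm k) := by
  rw [sum_lineSums_eq_sum_mul_lineCount, ← Equiv.sum_comp τ]
  simp only [Function.comp_apply, Equiv.symm_apply_apply]

-- At most three cells form no cycle in the bipartite graph of rows and columns, so that at most
-- `T.card - 1` of them lie on two lines of `T`.
lemma sum_lineCount_le (T : Finset (β ⊕ α)) {S : Finset (α × β)} (hS : S.card ≤ 3) :
    ∑ x ∈ S, lineCount T x ≤ T.card + (S.card - 1) := by
  set grid := T.toRight ×ˢ T.toLeft
  have hgrid : (S.filter (· ∈ grid)).card ≤ T.toRight.card * T.toLeft.card :=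
    (Finset.card_le_card fun x hx => (Finset.mem_filter.1 hx).2).trans_eq
      (Finset.card_product _ _)
  have hsub : (S.filter (· ∈ grid)).card ≤ S.card := Finset.card_filter_le _ _
  have hsum : ∑ x ∈ S, lineCount T x ≤ S.card + (S.filter (· ∈ grid)).card := by
    rw [Finset.card_eq_sum_ones, Finset.card_filter, ← Finset.sum_add_distrib]
    refine Finset.sum_le_sum fun x _ => ?_
    simp only [lineCount, grid, Finset.mem_product, Finset.mem_toRight, Finset.mem_toLeft]
    split_ifs <;> simp_all
  have hacyclic : (S.filter (· ∈ grid)).card + 1 ≤ T.card ∨ T.card = 0 := by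
    rw [← T.card_toLeft_add_card_toRight]
    generalize T.toRight.card = a, T.toLeft.card = b at *
    rcases Nat.lt_or_ge (a + b) 4 with h | h
    · have ha : a ≤ 3 := by omega
      have hb : b ≤ 3 := by omega
      interval_cases a <;> interval_cases b <;> omega
    · omega
  rcases hacyclic with h | h
  · rcases S.eq_empty_or_nonempty with rfl | hne
    · simp
    · have := hne.card_pos
      omega
  · rw [Finset.card_eq_zero] at h
    simp [h, lineCount]

lemma lineCount_le_card (T : Finset (β ⊕ α)) (x : α × β) : lineCount T x ≤ T.card := by
  simpa using sum_lineCount_le T (S := {x}) (by simp)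

lemma lineCount_add_le (T : Finset (β ⊕ α)) {x y : α × β} (hxy : x ≠ y) :
    lineCount T x + lineCount T y ≤ T.card + 1 := by
  simpa [hxy] using sum_lineCount_le T (S := {x, y}) (by simp [hxy])

lemma lineCount_add_add_le (T : Finset (β ⊕ α)) {x y z : α × β} (hxy : x ≠ y) (hxz : x ≠ z)
    (hyz : y ≠ z) : lineCount T x + lineCount T y + lineCount T z ≤ T.card + 2 := by
  simpa [hxy, hxz, hyz, add_assoc] using
    sum_lineCount_le T (S := {x, y, z}) (by simp [hxy, hxz, hyz])

lemma card_add_two_le_lineCount_add [Fintype α] [Fintype β] (T : Finset (β ⊕ α)) (x : α × β) :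
    T.card + 2 ≤ lineCount T x + (Fintype.card α + Fintype.card β) := by
  have hcompl := lineCount_le_card Tᶜ x
  have hadd := lineCount_add_lineCount_compl T x
  have hcard := Finset.card_add_card_compl T
  rw [Fintype.card_sum] at hcard
  omega

lemma sum_lineCount_le_mul_card [Fintype α] [Fintype β] {m : ℕ} (hα : Fintype.card α ≤ m)
    (hβ : Fintype.card β ≤ m) (T : Finset (β ⊕ α)) (S : Finset (α × β)) :
    ∑ x ∈ S, lineCount T x ≤ m * T.card := by
  have huniv : ((∑ x, lineCount T x : ℕ) : ℝ) = ∑ t ∈ T, lineSums 1 t := by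
    simp [sum_lineSums_eq_sum_mul_lineCount]
  have hline : ∀ t : β ⊕ α, lineSums (1 : α × β → ℝ) t ≤ m := by
    rintro (s | i) <;> simpa [lineSums]
  have hle : ((∑ x, lineCount T x : ℕ) : ℝ) ≤ T.card • (m : ℝ) :=
    huniv.trans_le (Finset.sum_le_card_nsmul T _ _ fun t _ => hline t)
  calc ∑ x ∈ S, lineCount T x ≤ ∑ x, lineCount T x :=
        Finset.sum_le_sum_of_subset S.subset_univ
    _ ≤ m * T.card := by
        rw [nsmul_eq_mul, mul_comm] at hle
        exact_mod_cast hle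

end Lines

section PriorityLists

/-- The priority list of lines used when the spectrum is nonnegative: row `0`, all columns in
order, then the remaining rows. -/
def headRank (d1 d2 : ℕ) : Fin d2 ⊕ Fin d1 → ℕ
  | .inl s => s + 1
  | .inr i => if (i : ℕ) = 0 then 0 else d2 + i

/-- The priority list of lines used when the spectrum has one negative value: the lines through
the last cell are moved to the end of `headRank`. -/
def headTailRank (d1 d2 : ℕ) : Fin d2 ⊕ Fin d1 → ℕ
  | .inl s => if (s : ℕ) + 1 = d2 then d1 + d2 - 2 else s + 1
  | .inr i => if (i : ℕ) = 0 then 0 else if (i : ℕ) + 1 = d1 then d1 + d2 - 1 else d2 - 1 + i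

lemma card_filter_lt_of_injective {γ : Type*} [Fintype γ] {r : γ → ℕ}
    (hr : Function.Injective r) (hlt : ∀ t, r t < Fintype.card γ) {k : ℕ}
    (hk : k ≤ Fintype.card γ) : (Finset.univ.filter fun t => r t < k).card = k := by
  have himage : Finset.univ.image r = Finset.range (Fintype.card γ) :=
    Finset.eq_of_subset_of_card_le (by simpa [Finset.image_subset_iff] using hlt)
      (by rw [Finset.card_image_of_injective _ hr, Finset.card_range, Finset.card_univ])
  rw [← Finset.card_image_of_injective _ hr, ← Finset.filter_image (p := (· < k)), himage,
    show (Finset.range (Fintype.card γ)).filter (· < k) = Finset.range k by grind,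
    Finset.card_range]

variable {d1 d2 : ℕ}

lemma card_filter_headRank_lt (h1 : 1 ≤ d1) (T : Finset (Fin d2 ⊕ Fin d1)) :
    (Finset.univ.filter fun t => headRank d1 d2 t < T.card).card = T.card := by
  refine card_filter_lt_of_injective ?_ ?_ T.card_le_univ
  · rintro (s | i) (t | j) h <;> grind [headRank]
  · rintro (s | i) <;> grind [headRank, Fintype.card_sum, Fintype.card_fin]

lemma card_filter_headTailRank_lt (h1 : 2 ≤ d1) (T : Finset (Fin d2 ⊕ Fin d1)) :
    (Finset.univ.filter fun t => headTailRank d1 d2 t < T.card).card = T.card := by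
  refine card_filter_lt_of_injective ?_ ?_ T.card_le_univ
  · rintro (s | i) (t | j) h <;> grind [headTailRank]
  · rintro (s | i) <;> grind [headTailRank, Fintype.card_sum, Fintype.card_fin]

lemma lineCount_filter_lt {α β : Type*} [Fintype α] [Fintype β] [DecidableEq α] [DecidableEq β]
    (r : β ⊕ α → ℕ) (k : ℕ) (x : α × β) :
    lineCount (Finset.univ.filter fun t => r t < k) x =
      (if r (.inr x.1) < k then 1 else 0) + if r (.inl x.2) < k then 1 else 0 := by
  simp [lineCount]

lemma finProdFinEquiv_symm_of_val_lt {k : Fin (d1 * d2)} (hk : (k : ℕ) < d2) :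
    ((finProdFinEquiv.symm k).1 : ℕ) = 0 ∧ ((finProdFinEquiv.symm k).2 : ℕ) = k :=
  ⟨Nat.div_eq_of_lt hk, Nat.mod_eq_of_lt hk⟩

lemma finProdFinEquiv_symm_of_val_add_one_eq {k : Fin (d1 * d2)} (hk : (k : ℕ) + 1 = d1 * d2) :
    ((finProdFinEquiv.symm k).1 : ℕ) + 1 = d1 ∧ ((finProdFinEquiv.symm k).2 : ℕ) + 1 = d2 := by
  obtain ⟨⟨i, s⟩, rfl⟩ := finProdFinEquiv.surjective k
  rw [Equiv.symm_apply_apply]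
  simp only [finProdFinEquiv_apply_val] at hk
  have hi : (i : ℕ) + 1 = d1 := by
    by_contra hne
    have : (i : ℕ) + 2 ≤ d1 := by omega
    nlinarith [s.isLt]
  have hlast : d1 * d2 = (i + 1) * d2 := by rw [hi]
  exact ⟨hi, by linarith⟩

lemma finProdFinEquiv_rev (x : Fin d1 × Fin d2) :
    finProdFinEquiv (x.1.rev, x.2.rev) = (finProdFinEquiv x).rev := by
  obtain ⟨⟨i, hi⟩, ⟨s, hs⟩⟩ := x
  ext
  simp only [Fin.val_rev, finProdFinEquiv_apply_val]
  obtain ⟨a, rfl⟩ := Nat.exists_eq_add_of_lt hi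
  have hsplit : (i + a + 1) * d2 = d2 * a + d2 * i + d2 := by ring
  rw [show i + a + 1 - (i + 1) = a by omega]
  omega

lemma exists_lineCount_head_le (h1 : 2 ≤ d1) (h2 : min d1 3 ≤ d2) (T : Finset (Fin d2 ⊕ Fin d1))
    {a b c : Fin (d1 * d2)} (ha : (a : ℕ) = 0) (hb : (b : ℕ) = 1) (hc : (c : ℕ) = 2) :
    ∃ T' : Finset (Fin d2 ⊕ Fin d1), T'.card = T.card ∧
      ∀ x y z : Fin d1 × Fin d2, x ≠ y → x ≠ z → y ≠ z →
        lineCount T x ≤ lineCount T' (finProdFinEquiv.symm a) ∧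
        lineCount T x + lineCount T y ≤
          lineCount T' (finProdFinEquiv.symm a) + lineCount T' (finProdFinEquiv.symm b) ∧
        lineCount T x + lineCount T y + lineCount T z ≤
          lineCount T' (finProdFinEquiv.symm a) + lineCount T' (finProdFinEquiv.symm b) +
            lineCount T' (finProdFinEquiv.symm c) := by
  refine ⟨_, card_filter_headRank_lt (by omega) T, fun x y z hxy hxz hyz => ?_⟩
  have hx := lineCount_le_card T x
  have hy := lineCount_le_card T y
  have hz := lineCount_le_card T z
  have hx2 := lineCount_le_two T x
  have hy2 := lineCount_le_two T y
  have hz2 := lineCount_le_two T z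
  have hpair := lineCount_add_le T hxy
  have htriple := lineCount_add_add_le T hxy hxz hyz
  obtain ⟨ha1, ha2⟩ := finProdFinEquiv_symm_of_val_lt (k := a) (by omega)
  obtain ⟨hb1, hb2⟩ := finProdFinEquiv_symm_of_val_lt (k := b) (by omega)
  simp only [lineCount_filter_lt]
  rcases Nat.lt_or_ge 2 d2 with h | h
  · obtain ⟨hc1, hc2⟩ := finProdFinEquiv_symm_of_val_lt (k := c) (by omega)
    simp only [headRank, ha1, ha2, hb1, hb2, hc1, hc2, ha, hb, hc, if_true]
    refine ⟨?_, ?_, ?_⟩ <;> split_ifs <;> omega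
  · obtain rfl : d2 = 2 := by omega
    obtain rfl : d1 = 2 := by omega
    obtain rfl : c = 2 := Fin.ext hc
    have htotal : lineCount T x + lineCount T y + lineCount T z ≤ 2 * T.card := by
      simpa [hxy, hxz, hyz, add_assoc] using
        sum_lineCount_le_mul_card (m := 2) (by simp) (by simp) T {x, y, z}
    have hc : (finProdFinEquiv.symm 2 : Fin 2 × Fin 2) = (1, 0) := by decide
    simp only [headRank, ha1, ha2, hb1, hb2, hc, ha, hb, Fin.val_zero, Fin.val_one]
    refine ⟨?_, ?_, ?_⟩ <;> split_ifs <;> omega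

lemma exists_lineCount_head_tail_le (h1 : 2 ≤ d1) (h2 : min d1 3 ≤ d2)
    (T : Finset (Fin d2 ⊕ Fin d1)) {a b c : Fin (d1 * d2)} (ha : (a : ℕ) = 0) (hb : (b : ℕ) = 1)
    (hc : (c : ℕ) + 1 = d1 * d2) :
    ∃ T' : Finset (Fin d2 ⊕ Fin d1), T'.card = T.card ∧
      ∀ x y z : Fin d1 × Fin d2, x ≠ y →
        lineCount T x ≤ lineCount T' (finProdFinEquiv.symm a) ∧
        lineCount T x + lineCount T y ≤
          lineCount T' (finProdFinEquiv.symm a) + lineCount T' (finProdFinEquiv.symm b) ∧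
        lineCount T' (finProdFinEquiv.symm c) ≤ lineCount T z := by
  refine ⟨_, card_filter_headTailRank_lt h1 T, fun x y z hxy => ?_⟩
  have hx := lineCount_le_card T x
  have hy := lineCount_le_card T y
  have hx2 := lineCount_le_two T x
  have hy2 := lineCount_le_two T y
  have hpair := lineCount_add_le T hxy
  have hz := card_add_two_le_lineCount_add T z
  rw [Fintype.card_fin, Fintype.card_fin] at hz
  have hT : T.card ≤ d2 + d1 := by simpa using T.card_le_univ
  obtain ⟨ha1, ha2⟩ := finProdFinEquiv_symm_of_val_lt (k := a) (by omega)
  obtain ⟨hb1, hb2⟩ := finProdFinEquiv_symm_of_val_lt (k := b) (by omega)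
  obtain ⟨hc1, hc2⟩ := finProdFinEquiv_symm_of_val_add_one_eq hc
  simp only [lineCount_filter_lt]
  simp only [headTailRank, ha1, ha2, hb1, hb2, hc1, hc2, ha, hb, if_true]
  refine ⟨?_, ?_, ?_⟩ <;> split_ifs <;> omega

end PriorityLists

section Arrangements

section AbelSummation

variable {ι : Type*} [Fintype ι] [DecidableEq ι] {μ f h : ι → ℝ} {a b c : ι}

lemma sum_mul_eq_add_add (hab : a ≠ b) (hac : a ≠ c) (hbc : b ≠ c)
    (hμ : ∀ k ∉ ({a, b, c} : Finset ι), μ k = 0) (f : ι → ℝ) :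
    ∑ k, μ k * f k = μ a * f a + μ b * f b + μ c * f c := by
  rw [← Finset.sum_subset ({a, b, c} : Finset ι).subset_univ fun k _ hk => by simp [hμ k hk]]
  simp [hab, hac, hbc, add_assoc]

lemma sum_mul_le_sum_mul_of_head (hab : a ≠ b) (hac : a ≠ c) (hbc : b ≠ c)
    (hμ : ∀ k ∉ ({a, b, c} : Finset ι), μ k = 0) (hba : μ b ≤ μ a) (hcb : μ c ≤ μ b)
    (hc : 0 ≤ μ c) (h1 : f a ≤ h a) (h2 : f a + f b ≤ h a + h b)
    (h3 : f a + f b + f c ≤ h a + h b + h c) : ∑ k, μ k * f k ≤ ∑ k, μ k * h k := by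
  have habel : ∀ u : ι → ℝ, ∑ k, μ k * u k =
      (μ a - μ b) * u a + (μ b - μ c) * (u a + u b) + μ c * (u a + u b + u c) := fun u => by
    rw [sum_mul_eq_add_add hab hac hbc hμ]
    ring
  rw [habel, habel]
  gcongr

lemma sum_mul_le_sum_mul_of_head_tail (hab : a ≠ b) (hac : a ≠ c) (hbc : b ≠ c)
    (hμ : ∀ k ∉ ({a, b, c} : Finset ι), μ k = 0) (hba : μ b ≤ μ a) (hb : 0 ≤ μ b)
    (hc : μ c ≤ 0) (h1 : f a ≤ h a) (h2 : f a + f b ≤ h a + h b) (h3 : h c ≤ f c) :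
    ∑ k, μ k * f k ≤ ∑ k, μ k * h k := by
  have habel : ∀ u : ι → ℝ, ∑ k, μ k * u k =
      (μ a - μ b) * u a + μ b * (u a + u b) - -μ c * u c := fun u => by
    rw [sum_mul_eq_add_add hab hac hbc hμ]
    ring
  rw [habel, habel]
  gcongr
  linarith

end AbelSummation

section Signs

variable {n : ℕ} {μ : Fin n → ℝ}

lemma val_lt_card_filter_pos (hμ : Antitone μ) {k : Fin n} (hk : 0 < μ k) :
    (k : ℕ) < (Finset.univ.filter fun j => 0 < μ j).card := by
  rw [← Nat.succ_le_iff, Nat.succ_eq_add_one, ← Fin.card_Iic]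
  exact Finset.card_le_card fun j hj => by simpa using hk.trans_le (hμ (Finset.mem_Iic.1 hj))

lemma le_val_add_card_filter_neg (hμ : Antitone μ) {k : Fin n} (hk : μ k < 0) :
    n ≤ k + (Finset.univ.filter fun j => μ j < 0).card := by
  rw [← Nat.sub_le_iff_le_add', ← Fin.card_Ici]
  exact Finset.card_le_card fun j hj => by simpa using (hμ (Finset.mem_Ici.1 hj)).trans_lt hk

lemma card_filter_pos_add_card_filter_neg (μ : Fin n → ℝ) :
    (Finset.univ.filter fun j => 0 < μ j).card + (Finset.univ.filter fun j => μ j < 0).card =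
      (Finset.univ.filter fun j => μ j ≠ 0).card := by
  rw [← Finset.card_union_of_disjoint (Finset.disjoint_filter.2 fun j _ => lt_asymm),
    ← Finset.filter_or]
  simp only [ne_iff_lt_or_gt, or_comm]

end Signs

variable {d1 d2 : ℕ}

lemma exists_sum_lineSums_le_of_nonneg (h1 : 2 ≤ d1) (h2 : min d1 3 ≤ d2)
    {μ : Fin (d1 * d2) → ℝ} (hμ : Antitone μ) (hnonneg : ∀ k, 0 ≤ μ k)
    (hzero : ∀ k : Fin (d1 * d2), 3 ≤ (k : ℕ) → μ k = 0) (τ : Fin d1 × Fin d2 ≃ Fin (d1 * d2))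
    (T : Finset (Fin d2 ⊕ Fin d1)) :
    ∃ T' : Finset (Fin d2 ⊕ Fin d1), T'.card = T.card ∧
      ∑ t ∈ T, lineSums (μ ∘ τ) t ≤ ∑ t ∈ T', lineSums (μ ∘ finProdFinEquiv) t := by
  have hn : 2 < d1 * d2 := by nlinarith [show 2 ≤ d2 by omega]
  let a : Fin (d1 * d2) := ⟨0, by omega⟩
  let b : Fin (d1 * d2) := ⟨1, by omega⟩
  let c : Fin (d1 * d2) := ⟨2, hn⟩
  obtain ⟨T', hcard, hT'⟩ := exists_lineCount_head_le (a := a) (b := b) (c := c) h1 h2 T rfl rfl rfl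
  obtain ⟨hle1, hle2, hle3⟩ := hT' (τ.symm a) (τ.symm b) (τ.symm c) (by simp [a, b])
    (by simp [a, c]) (by simp [b, c])
  refine ⟨T', hcard, ?_⟩
  rw [sum_lineSums_comp_equiv, sum_lineSums_comp_equiv]
  refine sum_mul_le_sum_mul_of_head (a := a) (b := b) (c := c) (by simp [a, b]) (by simp [a, c])
    (by simp [b, c]) (fun k hk => hzero k ?_) (hμ (Fin.le_def.2 zero_le_one))
    (hμ (Fin.le_def.2 one_le_two)) (hnonneg c) (mod_cast hle1) (mod_cast hle2) (mod_cast hle3)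
  simp only [Finset.mem_insert, Finset.mem_singleton, Fin.ext_iff, a, b, c] at hk
  omega

lemma exists_sum_lineSums_le_of_last_nonpos (h1 : 2 ≤ d1) (h2 : min d1 3 ≤ d2)
    {μ : Fin (d1 * d2) → ℝ} (hμ : Antitone μ)
    (hnonneg : ∀ k : Fin (d1 * d2), (k : ℕ) + 1 < d1 * d2 → 0 ≤ μ k)
    (hnonpos : ∀ k : Fin (d1 * d2), 2 ≤ (k : ℕ) → μ k ≤ 0) (τ : Fin d1 × Fin d2 ≃ Fin (d1 * d2))
    (T : Finset (Fin d2 ⊕ Fin d1)) :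
    ∃ T' : Finset (Fin d2 ⊕ Fin d1), T'.card = T.card ∧
      ∑ t ∈ T, lineSums (μ ∘ τ) t ≤ ∑ t ∈ T', lineSums (μ ∘ finProdFinEquiv) t := by
  have hn : 3 < d1 * d2 := by nlinarith [show 2 ≤ d2 by omega]
  let a : Fin (d1 * d2) := ⟨0, by omega⟩
  let b : Fin (d1 * d2) := ⟨1, by omega⟩
  let c : Fin (d1 * d2) := ⟨d1 * d2 - 1, by omega⟩
  have hab : a ≠ b := by simp [a, b]
  have hac : a ≠ c := Fin.ne_of_val_ne (by simp only [a, c]; omega)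
  have hbc : b ≠ c := Fin.ne_of_val_ne (by simp only [b, c]; omega)
  obtain ⟨T', hcard, hT'⟩ := exists_lineCount_head_tail_le (a := a) (b := b) (c := c) h1 h2 T rfl
    rfl (Nat.sub_add_cancel (by omega))
  obtain ⟨hle1, hle2, hle3⟩ := hT' (τ.symm a) (τ.symm b) (τ.symm c) (τ.symm.injective.ne hab)
  refine ⟨T', hcard, ?_⟩
  rw [sum_lineSums_comp_equiv, sum_lineSums_comp_equiv]
  refine sum_mul_le_sum_mul_of_head_tail hab hac hbc (fun k hk => ?_)
    (hμ (Fin.le_def.2 zero_le_one)) (hnonneg b (by simp only [b]; omega))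
    (hnonpos c (by simp only [c]; omega)) (mod_cast hle1) (mod_cast hle2) (mod_cast hle3)
  simp only [Finset.mem_insert, Finset.mem_singleton, Fin.ext_iff, a, b, c] at hk
  exact le_antisymm (hnonpos k (by omega)) (hnonneg k (by omega))

lemma majorizes_lineSums_of_card_neg_le_card_pos (h1 : 2 ≤ d1) (h2 : min d1 3 ≤ d2)
    {μ : Fin (d1 * d2) → ℝ} (hμ : Antitone μ)
    (hcard : (Finset.univ.filter fun k => μ k ≠ 0).card ≤ 3)
    (hsign : (Finset.univ.filter fun k => μ k < 0).card ≤
      (Finset.univ.filter fun k => 0 < μ k).card)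
    (τ : Fin d1 × Fin d2 ≃ Fin (d1 * d2)) :
    Majorizes (lineSums (μ ∘ τ)) (lineSums (μ ∘ finProdFinEquiv)) := by
  refine majorizes_of_forall_exists_sum_le (fun T => ?_) ?_
  · rw [← card_filter_pos_add_card_filter_neg] at hcard
    rcases Nat.eq_zero_or_pos (Finset.univ.filter fun k => μ k < 0).card with hneg | hneg
    · have hnonneg : ∀ k, 0 ≤ μ k := by
        simpa [Finset.filter_eq_empty_iff] using hneg
      refine exists_sum_lineSums_le_of_nonneg h1 h2 hμ hnonneg (fun k hk => ?_) τ T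
      refine le_antisymm (not_lt.1 fun hpos => ?_) (hnonneg k)
      have := val_lt_card_filter_pos hμ hpos
      omega
    · refine exists_sum_lineSums_le_of_last_nonpos h1 h2 hμ (fun k hk => not_lt.1 fun hlt => ?_)
        (fun k hk => not_lt.1 fun hpos => ?_) τ T
      · have := le_val_add_card_filter_neg hμ hlt
        omega
      · have := val_lt_card_filter_pos hμ hpos
        omega
  · rw [sum_lineSums, sum_lineSums]
    simp only [Function.comp_apply, Equiv.sum_comp]

lemma majorizes_lineSums_comp_equiv (h1 : 2 ≤ d1) (h2 : min d1 3 ≤ d2)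
    {μ : Fin (d1 * d2) → ℝ} (hμ : Antitone μ)
    (hcard : (Finset.univ.filter fun k => μ k ≠ 0).card ≤ 3)
    (τ : Fin d1 × Fin d2 ≃ Fin (d1 * d2)) :
    Majorizes (lineSums (μ ∘ τ)) (lineSums (μ ∘ finProdFinEquiv)) := by
  rcases le_total (Finset.univ.filter fun k => μ k < 0).card
    (Finset.univ.filter fun k => 0 < μ k).card with hsign | hsign
  · exact majorizes_lineSums_of_card_neg_le_card_pos h1 h2 hμ hcard hsign τ
  -- Negating `μ` and reversing the order of the rows and of the columns exchanges the signs.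
  have hcard_rev (p : ℝ → Prop) [DecidablePred p] :
      (Finset.univ.filter fun k : Fin (d1 * d2) => p (μ k.rev)).card =
        (Finset.univ.filter fun k => p (μ k)).card :=
    Finset.card_equiv Fin.revPerm (by simp)
  have hrev : (fun k => -μ k.rev) ∘ finProdFinEquiv =
      -((μ ∘ finProdFinEquiv) ∘ Fin.revPerm.prodCongr Fin.revPerm) :=
    funext fun x => congrArg (fun k => -μ k) (finProdFinEquiv_rev x).symm
  have hmaj := (majorizes_lineSums_of_card_neg_le_card_pos h1 h2 (μ := fun k => -μ k.rev)
    (fun i j hij => neg_le_neg (hμ (Fin.rev_le_rev.2 hij)))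
    (by simpa only [neg_ne_zero] using (hcard_rev (· ≠ 0)).trans_le hcard)
    (by simpa only [neg_lt_zero, neg_pos] using
      ((hcard_rev (0 < ·)).trans_le hsign).trans_eq (hcard_rev (· < 0)).symm)
    (τ.trans Fin.revPerm)).neg
  rw [hrev, lineSums_neg, lineSums_comp_prodCongr, neg_neg, ← lineSums_neg] at hmaj
  refine Majorizes.of_comp_equiv (Fin.revPerm.sumCongr Fin.revPerm) ?_
  convert hmaj using 2
  ext x
  simp

end Arrangements

section Spectrum

section Schur

variable {𝕜 n : Type*} [RCLike 𝕜] [Fintype n] [DecidableEq n]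

lemma of_norm_sq_mem_doublyStochastic {Z : Matrix n n 𝕜} (hZ : Z ∈ unitaryGroup n 𝕜) :
    (Matrix.of fun x y => ‖Z x y‖ ^ 2) ∈ doublyStochastic ℝ n := by
  refine mem_doublyStochastic_iff_sum.2 ⟨fun x y => sq_nonneg _, fun x => ?_, fun y => ?_⟩
  · have hrow := congrFun₂ (mem_unitaryGroup_iff.1 hZ) x x
    simp only [mul_apply, star_apply, RCLike.star_def, RCLike.mul_conj, one_apply_eq] at hrow
    exact_mod_cast hrow
  · have hcol := congrFun₂ (mem_unitaryGroup_iff'.1 hZ) y y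
    simp only [mul_apply, star_apply, RCLike.star_def, RCLike.conj_mul, one_apply_eq] at hcol
    exact_mod_cast hcol

lemma star_eigenvectorUnitary_mul_mul {A : Matrix n n 𝕜} (hA : A.IsHermitian) :
    star (hA.eigenvectorUnitary : Matrix n n 𝕜) * A * hA.eigenvectorUnitary =
      diagonal fun i => (hA.eigenvalues i : 𝕜) := by
  have h := hA.conjStarAlgAut_star_eigenvectorUnitary
  rwa [Unitary.conjStarAlgAut_star_apply] at h

lemma exists_doublyStochastic_diag_conj_eq {A : Matrix n n 𝕜} (hA : A.IsHermitian)
    {W : Matrix n n 𝕜} (hW : W ∈ unitaryGroup n 𝕜) :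
    ∃ D ∈ doublyStochastic ℝ n,
      ∀ x, (star W * A * W) x x = ((D *ᵥ hA.eigenvalues) x : ℝ) := by
  set X := hA.eigenvectorUnitary
  set Z := star W * (X : Matrix n n 𝕜)
  refine ⟨_, of_norm_sq_mem_doublyStochastic (mul_mem (Unitary.star_mem hW) X.2 : Z ∈ _),
    fun x => ?_⟩
  have hconj : star W * A * W = Z * diagonal (fun i => (hA.eigenvalues i : 𝕜)) * star Z := by
    conv_lhs => rw [hA.spectral_theorem, Unitary.conjStarAlgAut_apply]
    simp only [Z, star_mul, star_star, Matrix.mul_assoc]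
    rfl
  rw [hconj, mul_apply]
  simp only [mul_diagonal, star_apply, RCLike.star_def, mulVec, dotProduct, of_apply]
  push_cast
  exact Finset.sum_congr rfl fun y _ => by rw [← RCLike.mul_conj]; ring

lemma majorizes_lineSums_mulVec {α β κ : Type*} [Fintype α] [Fintype β] [Fintype κ]
    [DecidableEq α] [DecidableEq β] {D : Matrix (α × β) (α × β) ℝ}
    (hD : D ∈ doublyStochastic ℝ (α × β)) {c : α × β → ℝ} {y : κ → ℝ}
    (h : ∀ σ : Equiv.Perm (α × β), Majorizes (lineSums (c ∘ σ)) y) :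
    Majorizes (lineSums (D *ᵥ c)) y := by
  obtain ⟨w, hw, hw1, rfl⟩ := exists_eq_sum_perm_of_mem_doublyStochastic hD
  simp only [Matrix.sum_mulVec, Matrix.smul_mulVec, permMatrix_mulVec, lineSums_sum_smul]
  exact Majorizes.sum_smul hw hw1 h

end Schur

section PartialTrace

variable {d1 d2 : ℕ}

lemma ptrace2_kronecker_one_mul (A : Matrix (Fin d1) (Fin d1) ℂ)
    (C : Matrix (Fin d1 × Fin d2) (Fin d1 × Fin d2) ℂ) :
    ptrace2 ((A ⊗ₖ 1) * C) = A * ptrace2 C := by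
  ext i j
  simp only [ptrace2, of_apply, mul_apply, kroneckerMap_apply, one_apply, Fintype.sum_prod_type,
    mul_ite, mul_one, mul_zero, ite_mul, zero_mul, Finset.sum_ite_eq, Finset.mem_univ, if_true,
    Finset.mul_sum]
  exact Finset.sum_comm

lemma ptrace2_mul_kronecker_one (C : Matrix (Fin d1 × Fin d2) (Fin d1 × Fin d2) ℂ)
    (A : Matrix (Fin d1) (Fin d1) ℂ) : ptrace2 (C * (A ⊗ₖ 1)) = ptrace2 C * A := by
  ext i j
  simp only [ptrace2, of_apply, mul_apply, kroneckerMap_apply, one_apply, Fintype.sum_prod_type,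
    mul_ite, mul_one, mul_zero, Finset.sum_ite_eq', Finset.mem_univ, if_true, Finset.sum_mul]
  exact Finset.sum_comm

lemma ptrace2_one_kronecker_mul_comm (B : Matrix (Fin d2) (Fin d2) ℂ)
    (C : Matrix (Fin d1 × Fin d2) (Fin d1 × Fin d2) ℂ) :
    ptrace2 ((1 ⊗ₖ B) * C) = ptrace2 (C * (1 ⊗ₖ B)) := by
  ext i j
  simp only [ptrace2, of_apply, mul_apply, kroneckerMap_apply, one_apply,
    Fintype.sum_prod_type_right, mul_ite, ite_mul, one_mul, zero_mul, mul_zero, Finset.sum_ite_eq,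
    Finset.sum_ite_eq', Finset.mem_univ, if_true]
  rw [Finset.sum_comm]
  simp only [mul_comm]

lemma ptrace2_star_kronecker_conj (C : Matrix (Fin d1 × Fin d2) (Fin d1 × Fin d2) ℂ)
    (U : Matrix (Fin d1) (Fin d1) ℂ) {V : Matrix (Fin d2) (Fin d2) ℂ}
    (hV : V ∈ unitaryGroup (Fin d2) ℂ) :
    ptrace2 (star (U ⊗ₖ V) * C * (U ⊗ₖ V)) = star U * ptrace2 C * U := by
  have hsplit : star (U ⊗ₖ V) * C * (U ⊗ₖ V) =
      (star U ⊗ₖ 1) * ((1 ⊗ₖ star V) * (C * (1 ⊗ₖ V))) * (U ⊗ₖ 1) := by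
    have hUV : U ⊗ₖ V = (1 ⊗ₖ V) * (U ⊗ₖ 1) := by
      rw [← mul_kronecker_mul, Matrix.one_mul, Matrix.mul_one]
    have hUV' : star (U ⊗ₖ V) = (star U ⊗ₖ 1) * (1 ⊗ₖ star V) := by
      rw [← mul_kronecker_mul, Matrix.one_mul, Matrix.mul_one]
      exact conjTranspose_kronecker U V
    rw [hUV', hUV]
    simp only [Matrix.mul_assoc]
  rw [hsplit, ptrace2_mul_kronecker_one, ptrace2_kronecker_one_mul,
    ptrace2_one_kronecker_mul_comm, Matrix.mul_assoc C, ← mul_kronecker_mul,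
    mem_unitaryGroup_iff.1 hV, Matrix.one_mul, one_kronecker_one, Matrix.mul_one]

lemma ptrace1_eq_ptrace2_submatrix_swap (C : Matrix (Fin d1 × Fin d2) (Fin d1 × Fin d2) ℂ) :
    ptrace1 C = ptrace2 (C.submatrix (Equiv.prodComm _ _) (Equiv.prodComm _ _)) := rfl

lemma ptrace1_star_kronecker_conj (C : Matrix (Fin d1 × Fin d2) (Fin d1 × Fin d2) ℂ)
    {U : Matrix (Fin d1) (Fin d1) ℂ} (hU : U ∈ unitaryGroup (Fin d1) ℂ)
    (V : Matrix (Fin d2) (Fin d2) ℂ) :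
    ptrace1 (star (U ⊗ₖ V) * C * (U ⊗ₖ V)) = star V * ptrace1 C * V := by
  have hswap : (U ⊗ₖ V).submatrix (Equiv.prodComm _ _) (Equiv.prodComm _ _) = V ⊗ₖ U := by
    ext x y
    exact mul_comm _ _
  rw [ptrace1_eq_ptrace2_submatrix_swap, ptrace1_eq_ptrace2_submatrix_swap,
    ← ptrace2_star_kronecker_conj _ V hU, ← hswap, star_eq_conjTranspose, star_eq_conjTranspose,
    conjTranspose_submatrix, submatrix_mul_equiv, submatrix_mul_equiv]

lemma exists_eigenvalues_ptrace_eq_lineSums {C : Matrix (Fin d1 × Fin d2) (Fin d1 × Fin d2) ℂ}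
    (hC : C.IsHermitian) (htr1 : (ptrace1 C).IsHermitian) (htr2 : (ptrace2 C).IsHermitian) :
    ∃ D ∈ doublyStochastic ℝ (Fin d1 × Fin d2),
      Sum.elim htr1.eigenvalues htr2.eigenvalues = lineSums (D *ᵥ hC.eigenvalues) := by
  set U := htr2.eigenvectorUnitary
  set V := htr1.eigenvectorUnitary
  obtain ⟨D, hD, hdiag⟩ := exists_doublyStochastic_diag_conj_eq hC (kronecker_mem_unitary U.2 V.2)
  refine ⟨D, hD, funext (Sum.rec (fun s => ?_) fun i => ?_)⟩
  · have h := congrFun₂ (ptrace1_star_kronecker_conj C U.2 V) s s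
    rw [star_eigenvectorUnitary_mul_mul htr1, diagonal_apply_eq] at h
    simp only [ptrace1, of_apply, hdiag] at h
    exact_mod_cast h.symm
  · have h := congrFun₂ (ptrace2_star_kronecker_conj C U V.2) i i
    rw [star_eigenvectorUnitary_mul_mul htr2, diagonal_apply_eq] at h
    simp only [ptrace2, of_apply, hdiag] at h
    exact_mod_cast h.symm

end PartialTrace

lemma card_filter_ne_zero_eq_rank {𝕜 ι n : Type*} [RCLike 𝕜] [Fintype ι] [Fintype n]
    [DecidableEq n] {A : Matrix n n 𝕜} (hA : A.IsHermitian) {μ : ι → ℝ} (g : ι ≃ n)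
    (hg : ∀ k, μ k = hA.eigenvalues (g k)) :
    (Finset.univ.filter fun k => μ k ≠ 0).card = A.rank := by
  rw [hA.rank_eq_card_non_zero_eigs, Fintype.card_subtype]
  exact Finset.card_equiv g (by simp [hg])

end Spectrum

theorem sufficient_rank_three_square_case_general {d1 d2 : ℕ} (h1 : 2 ≤ d1) (h2 : min d1 3 ≤ d2)
    {C : Matrix (Fin d1 × Fin d2) (Fin d1 × Fin d2) ℂ} (hC : C.IsHermitian)
    (hrank : C.rank ≤ 3)
    (htr1 : (ptrace1 C).IsHermitian) (htr2 : (ptrace2 C).IsHermitian)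
    {μ : Fin (d1 * d2) → ℝ} (hμ : Antitone μ)
    (g : Fin (d1 * d2) ≃ Fin d1 × Fin d2) (hg : ∀ k, μ k = hC.eigenvalues (g k)) :
    Majorizes (Sum.elim htr1.eigenvalues htr2.eigenvalues)
      (lineSums (μ ∘ finProdFinEquiv)) := by
  obtain ⟨D, hD, hDC⟩ := exists_eigenvalues_ptrace_eq_lineSums hC htr1 htr2
  have hcard := (card_filter_ne_zero_eq_rank hC g hg).trans_le hrank
  have hperm : hC.eigenvalues = μ ∘ g.symm := by
    ext x
    simp [hg]
  rw [hDC, hperm]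
  exact majorizes_lineSums_mulVec hD fun σ =>
    majorizes_lineSums_comp_equiv h1 h2 hμ hcard (σ.trans g.symm)

theorem sufficient_rank_three_square_case (d : ℕ) (hd : 2 ≤ d)
    (C : Matrix (Fin d × Fin d) (Fin d × Fin d) ℂ) (hC : C.IsHermitian)
    (hrank : C.rank ≤ 3)
    (htr1 : (ptrace1 C).IsHermitian) (htr2 : (ptrace2 C).IsHermitian)
    -- `μ` lists the eigenvalues of `C` in decreasing order
    (μ : Fin (d * d) → ℝ) (hμ : Antitone μ)
    (g : Fin (d * d) ≃ Fin d × Fin d) (hg : ∀ k, μ k = hC.eigenvalues (g k)) :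
    Majorizes (Sum.elim htr1.eigenvalues htr2.eigenvalues)
      (Sum.elim (fun s : Fin d => ∑ i : Fin d, μ (finProdFinEquiv (i, s)))
                (fun j : Fin d => ∑ s : Fin d, μ (finProdFinEquiv (j, s)))) :=
  sufficient_rank_three_square_case_general hd (min_le_left d 3) hC hrank htr1 htr2 hμ g hg
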